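/- Let P ⊆ ℤ^n_{≥0} be a polymatroid over [n] with rank function f and let g = Σ_{i'∈[n]} f({i'}) − f([n]). Then for every k ≤ n−1, the following are equivalent: (1) [x^i]I_P(x) = C(g+i−1, i) for all i ≤ k; (2) Σ_{i'∈J} f({i'}) = f(J) for all J ⊆ [n] with |J| = k. Here C(·,·) denotes the binomial coefficient. -/

import Mathlib

open Finset Polynomial

/-- `f` is the rank function of a polymatroid over the ground set `[n]` (encoded as `Fin n`):
normalization, monotonicity and submodularity. -/
def IsPolymatroidRank (n : ℕ) (f : Finset (Fin n) → ℕ) : Prop :=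
  f ∅ = 0 ∧ (∀ I J : Finset (Fin n), I ⊆ J → f I ≤ f J) ∧
    ∀ I J : Finset (Fin n), f (I ∪ J) + f (I ∩ J) ≤ f I + f J

/-- The set of bases of the polymatroid `P ⊆ ℤ^n_{≥0}` with rank function `f`:
all nonnegative integer vectors `a` with `∑_{i ∈ I} a i ≤ f I` for every `I ⊆ [n]`
and `∑_{i ∈ [n]} a i = f [n]`.  (Every such vector has entries `≤ f [n]`, whence the
bounding box used to produce a `Finset`.) -/
def polyBases (n : ℕ) (f : Finset (Fin n) → ℕ) : Finset (Fin n → ℤ) :=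
  ((Finset.univ : Finset (Fin n → Fin (f Finset.univ + 1))).image
      (fun a i => ((a i : ℕ) : ℤ))).filter
    fun a => (∀ i, 0 ≤ a i) ∧ (∀ I : Finset (Fin n), ∑ i ∈ I, a i ≤ (f I : ℤ)) ∧
      ∑ i, a i = (f Finset.univ : ℤ)

/-- The externally active indices of a basis `a`: those `i` such that
`a + e_i - e_j ∉ P` for every `j < i`. -/
def extAct (n : ℕ) (f : Finset (Fin n) → ℕ) (a : Fin n → ℤ) : Finset (Fin n) :=
  Finset.univ.filter fun i => ∀ j, j < i →
    (fun t => a t + (if t = i then 1 else 0) - (if t = j then 1 else 0)) ∉ polyBases n f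

/-- The internally active indices of a basis `a`: those `i` such that
`a - e_i + e_j ∉ P` for every `j < i`. -/
def intAct (n : ℕ) (f : Finset (Fin n) → ℕ) (a : Fin n → ℤ) : Finset (Fin n) :=
  Finset.univ.filter fun i => ∀ j, j < i →
    (fun t => a t - (if t = i then 1 else 0) + (if t = j then 1 else 0)) ∉ polyBases n f

/-- The exterior polynomial `X_P(y) = ∑_{a ∈ P} y^(n - |Ext(a)|)`. -/
noncomputable def exteriorPoly (n : ℕ) (f : Finset (Fin n) → ℕ) : Polynomial ℤ :=
  ∑ a ∈ polyBases n f, X ^ (n - (extAct n f a).card)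

/-- The interior polynomial `I_P(x) = ∑_{a ∈ P} x^(n - |Int(a)|)`. -/
noncomputable def interiorPoly (n : ℕ) (f : Finset (Fin n) → ℕ) : Polynomial ℤ :=
  ∑ a ∈ polyBases n f, X ^ (n - (intAct n f a).card)

/-- `r_k(P) = min { n - |F| : F ⊆ [n], f F ≤ f [n] - k }` (junk value `0` if no such `F`). -/
noncomputable def rk (n : ℕ) (f : Finset (Fin n) → ℕ) (k : ℕ) : ℕ :=
  sInf {m | ∃ F : Finset (Fin n), (f F : ℤ) ≤ (f Finset.univ : ℤ) - k ∧ m = n - F.card}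

/-- `r'_k(P) = min { |F| : F ⊆ [n], ∑_{i ∈ F} f {i} - f F ≥ k }` (junk value `0` if no such `F`). -/
noncomputable def rk' (n : ℕ) (f : Finset (Fin n) → ℕ) (k : ℕ) : ℕ :=
  sInf {m | ∃ F : Finset (Fin n), (k : ℤ) ≤ (∑ i ∈ F, (f {i} : ℤ)) - (f F : ℤ) ∧ m = F.card}

/-- `H_j(P)`: the flats `H` (i.e. `f (H ∪ {e}) > f H` for all `e ∉ H`) with
`f H = f [n] - 1` and `n - |H| = j`. -/
def Hset (n : ℕ) (f : Finset (Fin n) → ℕ) (j : ℕ) : Finset (Finset (Fin n)) :=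
  Finset.univ.filter fun H =>
    (∀ e, e ∉ H → f H < f (insert e H)) ∧ (f H : ℤ) = (f Finset.univ : ℤ) - 1 ∧
      n - H.card = j

/-- `C_j(P)`: the sets `C` with `|C| = j`, `∑_{i ∈ C} f {i} - f C = 1` and
`∑_{i ∈ C \ {j'}} f {i} = f (C \ {j'})` for every `j' ∈ C`. -/
def Cset (n : ℕ) (f : Finset (Fin n) → ℕ) (j : ℕ) : Finset (Finset (Fin n)) :=
  Finset.univ.filter fun C => C.card = j ∧
    (∑ i ∈ C, (f {i} : ℤ)) - (f C : ℤ) = 1 ∧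
    ∀ j' ∈ C, (∑ i ∈ C.erase j', (f {i} : ℤ)) = (f (C.erase j') : ℤ)

/-- The dual rank function `f*(I) = f([n] \ I) - f([n]) + ∑_{i ∈ I} f {i}`
(the subtraction is exact for a polymatroid rank function). -/
def fdual (n : ℕ) (f : Finset (Fin n) → ℕ) : Finset (Fin n) → ℕ :=
  fun I => f (Finset.univ \ I) + (∑ i ∈ I, f {i}) - f Finset.univ

/-! Replace a vector `c` of nonnegative integers with coordinate sum `g + t` by `b i = f {i} - c i`.
Either `b` violates one of the inequalities `∑ i ∈ J, b i ≤ f J`, and then `c` is called deficient;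
or there is exactly one base `a ≥ b` such that `a - b` is supported on the internally active indices
of `a`, the lexicographically largest independent vector above `b`. A base with `n - i` internally
active indices therefore accounts for `multichoose (n - i) t` vectors, and comparison with the
identity `multichoose n (g + t) = ∑ i < n, multichoose g i * multichoose (n - i) t` shows that the
number of deficient vectors is
`∑ i < n, (multichoose g i - [x^i] I_P) * multichoose (n - i) t`.
As a function of `t`, `multichoose m t` has order of growth `t ^ (m - 1)`, so this sum is negligible
against `multichoose (n - k) t` exactly when its coefficients vanish for all `i ≤ k`.

On the other hand `c` is deficient when `∑ i ∈ J, c i < ∑ i ∈ J, f {i} - f J` for some `J`. This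
right-hand side is monotone in `J` and at most `g`. It therefore bounds the coordinates in `J`, and
if it is positive then `J` contributes on the order of `multichoose (n - #J) t` vectors, otherwise
none. The deficient vectors are thus negligible exactly when no `J` with `k` elements contributes.
-/

open Asymptotics
open Filter (Tendsto atTop tendsto_atTop_add_const_left eventually_gt_atTop)

section Multichoose

theorem succ_multichoose_add (n g t : ℕ) :
    (n + 1).multichoose (g + t) =
      ∑ i ∈ range (n + 1), g.multichoose i * (n + 1 - i).multichoose t := by
  induction g generalizing n with
  | zero => simp [sum_range_succ']
  | succ g ihg =>
    induction n with
    | zero => simp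
    | succ n ihn =>
      have pascal : (n + 2).multichoose (g + 1 + t) =
          (n + 2).multichoose (g + t) + (n + 1).multichoose (g + 1 + t) := by
        rw [Nat.add_right_comm g 1 t, Nat.multichoose_succ_succ, add_comm]
      rw [pascal, ihg, ihn, sum_range_succ' _ (n + 1), sum_range_succ' _ (n + 1)]
      simp only [Nat.multichoose_succ_succ, Nat.add_sub_add_right, Nat.multichoose_zero_right,
        add_mul, sum_add_distrib]
      ring

theorem multichoose_left_mono (t : ℕ) : Monotone fun m ↦ Nat.multichoose m t := by
  refine monotone_nat_of_le_succ fun m ↦ ?_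
  cases t with
  | zero => simp
  | succ t => exact Nat.multichoose_succ_succ m t ▸ Nat.le_add_right _ _

theorem succ_multichoose_right_mono (m : ℕ) : Monotone (m + 1).multichoose :=
  monotone_nat_of_le_succ fun t ↦ Nat.multichoose_succ_succ m t ▸ Nat.le_add_left _ _

theorem multichoose_pos {m : ℕ} (hm : 0 < m) (t : ℕ) : 0 < m.multichoose t :=
  Nat.multichoose_eq m t ▸ Nat.choose_pos (by lia)

theorem mul_succ_multichoose (m t : ℕ) :
    m * (m + 1).multichoose t = (m + t) * m.multichoose t := by
  cases m with
  | zero => cases t <;> simp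
  | succ m =>
    have h := Nat.choose_mul_succ_eq (m + t) t
    rw [Nat.multichoose_eq, Nat.multichoose_eq, show m + 1 + 1 + t - 1 = m + t + 1 by lia,
      show m + 1 + t - 1 = m + t by lia]
    rw [show m + t + 1 - t = m + 1 by lia] at h
    linarith

theorem multichoose_succ_right_le (m t : ℕ) : m.multichoose (t + 1) ≤ m * m.multichoose t := by
  induction m with
  | zero => simp
  | succ m ih =>
    calc (m + 1).multichoose (t + 1)
        = m.multichoose (t + 1) + (m + 1).multichoose t := Nat.multichoose_succ_succ m t
      _ ≤ m * (m + 1).multichoose t + (m + 1).multichoose t := by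
        gcongr
        exact ih.trans (Nat.mul_le_mul_left m (multichoose_left_mono t m.le_succ))
      _ = (m + 1) * (m + 1).multichoose t := by ring

theorem multichoose_add_right_le (m t s : ℕ) :
    m.multichoose (t + s) ≤ m ^ s * m.multichoose t := by
  induction s with
  | zero => simp
  | succ s ih =>
    calc m.multichoose (t + s + 1)
        ≤ m * m.multichoose (t + s) := multichoose_succ_right_le m (t + s)
      _ ≤ m * (m ^ s * m.multichoose t) := Nat.mul_le_mul_left m ih
      _ = m ^ (s + 1) * m.multichoose t := by ring

theorem multichoose_isBigO {m m' : ℕ} (h : m ≤ m') :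
    (fun t ↦ (m.multichoose t : ℝ)) =O[atTop] fun t ↦ (m'.multichoose t : ℝ) :=
  isBigO_of_le _ fun t ↦ by simpa using multichoose_left_mono t h

theorem multichoose_isLittleO {m m' : ℕ} (h : m < m') :
    (fun t ↦ (m.multichoose t : ℝ)) =o[atTop] fun t ↦ (m'.multichoose t : ℝ) := by
  refine IsLittleO.trans_isBigO ?_ (multichoose_isBigO (Nat.succ_le_of_lt h))
  have ratio_tendsto : Tendsto (fun t : ℕ ↦ (m : ℝ) / (m + t)) atTop (nhds 0) :=
    tendsto_const_nhds.div_atTop (tendsto_atTop_add_const_left _ _ tendsto_natCast_atTop_atTop)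
  refine isLittleO_iff_exists_eq_mul.2 ⟨_, ratio_tendsto, ?_⟩
  filter_upwards [eventually_gt_atTop 0] with t ht
  have hne : (m : ℝ) + t ≠ 0 := by positivity
  have hmul : (m : ℝ) * (m + 1).multichoose t = (m + t) * m.multichoose t :=
    mod_cast mul_succ_multichoose m t
  simp only [Pi.mul_apply]
  field_simp
  linarith

theorem multichoose_not_isLittleO_self {m : ℕ} (hm : 0 < m) :
    ¬(fun t ↦ (m.multichoose t : ℝ)) =o[atTop] fun t ↦ (m.multichoose t : ℝ) :=
  isLittleO_irrefl <| .of_forall fun t ↦ mod_cast (multichoose_pos hm t).ne'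

theorem sum_mul_multichoose_isLittleO {n k : ℕ} {s : Finset ℕ} (hs : ∀ i ∈ s, i < n) {w : ℕ → ℝ}
    (hw : ∀ i ∈ s, i ≤ k → w i = 0) :
    (fun t ↦ ∑ i ∈ s, w i * (n - i).multichoose t) =o[atTop]
      fun t ↦ ((n - k).multichoose t : ℝ) := by
  refine IsLittleO.fun_sum fun i hi ↦ ?_
  rcases le_or_gt i k with hik | hik
  · simp [hw i hi hik]
  · exact (multichoose_isLittleO (Nat.sub_lt_sub_left (hik.trans (hs i hi)) hik)).const_mul_left _

theorem sum_mul_multichoose_isLittleO_iff {n k : ℕ} (hk : k < n) (w : ℕ → ℝ) :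
    ((fun t ↦ ∑ i ∈ range n, w i * (n - i).multichoose t) =o[atTop]
      fun t ↦ ((n - k).multichoose t : ℝ)) ↔ ∀ i ≤ k, w i = 0 := by
  refine ⟨fun h i ↦ ?_, fun hw ↦ sum_mul_multichoose_isLittleO (by simp) fun i _ ↦ hw i⟩
  induction i using Nat.strong_induction_on with
  | _ i ih =>
    intro hik
    have hin : i < n := hik.trans_lt hk
    have hrest : (fun t ↦ ∑ j ∈ (range n).erase i, w j * (n - j).multichoose t) =o[atTop]
        fun t ↦ ((n - i).multichoose t : ℝ) :=
      sum_mul_multichoose_isLittleO (fun j hj ↦ mem_range.1 (mem_of_mem_erase hj)) fun j hj hji ↦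
        ih j (hji.lt_of_ne (ne_of_mem_erase hj)) (hji.trans hik)
    have hlead : (fun t ↦ w i * ((n - i).multichoose t : ℝ)) =o[atTop]
        fun t ↦ ((n - i).multichoose t : ℝ) := by
      refine ((h.trans_isBigO (multichoose_isBigO (by lia))).sub hrest).congr_left fun t ↦ ?_
      rw [← add_sum_erase _ _ (mem_range.2 hin), add_sub_cancel_right]
    by_contra hwi
    exact multichoose_not_isLittleO_self (Nat.sub_pos_of_lt hin)
      ((isLittleO_const_mul_left_iff hwi).1 hlead)

end Multichoose

section PiAntidiag

open scoped Pointwise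

variable {ι : Type*} [DecidableEq ι]

theorem card_piAntidiag (s : Finset ι) (t : ℕ) : #(piAntidiag s t) = (#s).multichoose t := by
  rw [← card_finsuppAntidiag_nat_eq_multichoose, finsuppAntidiag, card_map, card_attach]

theorem piAntidiag_subset_piAntidiag {s t : Finset ι} (hst : s ⊆ t) (m : ℕ) :
    piAntidiag s m ⊆ piAntidiag t m := by
  intro c hc
  obtain ⟨hsum, hsupp⟩ := mem_piAntidiag.1 hc
  refine mem_piAntidiag.2 ⟨?_, fun i hi ↦ hst (hsupp i hi)⟩
  rw [← hsum]
  exact (sum_subset hst fun i _ hi ↦ not_not.1 (mt (hsupp i) hi)).symm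

variable [Fintype ι]

theorem filter_le_piAntidiag_univ (s : ι → ℕ) (A : Finset ι) (t : ℕ) :
    {c ∈ piAntidiag (univ : Finset ι) (∑ i, s i + t) | ∀ i, s i ≤ c i ∧ (s i < c i → i ∈ A)} =
      (piAntidiag A t).map (addLeftEmbedding s) := by
  ext c
  simp only [mem_filter, mem_map, addLeftEmbedding_apply]
  constructor
  · rintro ⟨hc, hcA⟩
    have hadd : ∀ i, (c - s) i + s i = c i := fun i ↦ Nat.sub_add_cancel (hcA i).1
    have hsupp : ∀ i, (c - s) i ≠ 0 → i ∈ A := fun i hi ↦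
      (hcA i).2 (Nat.sub_ne_zero_iff_lt.1 hi)
    have hsum : ∑ i, (c - s) i = t := by
      have hsum_add := sum_congr rfl fun i (_ : i ∈ univ) ↦ hadd i
      rw [sum_add_distrib] at hsum_add
      linarith [(mem_piAntidiag.1 hc).1]
    refine ⟨c - s, mem_piAntidiag.2 ⟨?_, hsupp⟩, add_tsub_cancel_of_le fun i ↦ (hcA i).1⟩
    rw [← hsum]
    exact sum_subset (subset_univ A) fun i _ hi ↦ not_not.1 (mt (hsupp i) hi)
  · rintro ⟨v, hv, rfl⟩
    have hsum : ∑ i, v i = t :=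
      (mem_piAntidiag.1 (piAntidiag_subset_piAntidiag (subset_univ A) t hv)).1
    refine ⟨by simp [sum_add_distrib, hsum], fun i ↦ ⟨by simp, fun hi ↦ ?_⟩⟩
    exact (mem_piAntidiag.1 hv).2 i (by simpa [Nat.pos_iff_ne_zero] using hi)

theorem filter_sum_lt_piAntidiag_subset (J : Finset ι) (g t : ℕ) :
    {c ∈ piAntidiag (univ : Finset ι) (g + t) | ∑ i ∈ J, c i < g} ⊆
      (range g).biUnion fun s ↦ piAntidiag J s + piAntidiag Jᶜ (t + (g - s)) := by
  intro c hc
  obtain ⟨hsum, hlt⟩ := by simpa using hc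
  have hsplit : ∑ i ∈ J, c i + ∑ i ∈ Jᶜ, c i = ∑ i, c i := sum_add_sum_compl J c
  refine mem_biUnion.2 ⟨∑ i ∈ J, c i, mem_range.2 hlt, mem_add.2
    ⟨J.piecewise c 0, ?_, J.piecewise 0 c, ?_, ?_⟩⟩
  · exact mem_piAntidiag.2
      ⟨by simp [sum_piecewise], fun i hi ↦ by_contra fun hiJ ↦ hi (by simp [hiJ])⟩
  · have hcompl : Jᶜ \ J = Jᶜ := sdiff_eq_self_of_disjoint disjoint_compl_left
    simp only [mem_piAntidiag, sum_piecewise, hcompl, mem_compl]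
    refine ⟨by simp only [Pi.zero_apply, sum_const_zero]; lia, fun i hi hiJ ↦ hi (by simp [hiJ])⟩
  · ext i
    by_cases hi : i ∈ J <;> simp [hi]

theorem card_filter_sum_lt_piAntidiag_isBigO (J : Finset ι) (g : ℕ) :
    (fun t ↦ (#{c ∈ piAntidiag univ (g + t) | ∑ i ∈ J, c i < g} : ℝ)) =O[atTop]
      fun t ↦ ((#Jᶜ).multichoose t : ℝ) := by
  refine IsBigO.of_bound (∑ s ∈ range g, (#J).multichoose s * #Jᶜ ^ (g - s) : ℕ) <|
    .of_forall fun t ↦ ?_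
  simp only [RCLike.norm_natCast]
  norm_cast
  calc #{c ∈ piAntidiag univ (g + t) | ∑ i ∈ J, c i < g}
      ≤ ∑ s ∈ range g, #(piAntidiag J s + piAntidiag Jᶜ (t + (g - s))) :=
        (card_le_card (filter_sum_lt_piAntidiag_subset J g t)).trans card_biUnion_le
    _ ≤ ∑ s ∈ range g, (#J).multichoose s * (#Jᶜ).multichoose (t + (g - s)) := by
        gcongr with s
        simpa only [card_piAntidiag] using card_add_le (s := piAntidiag J s) (t := piAntidiag Jᶜ _)
    _ ≤ ∑ s ∈ range g, (#J).multichoose s * (#Jᶜ ^ (g - s) * (#Jᶜ).multichoose t) := by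
        gcongr with s
        exact multichoose_add_right_le _ _ _
    _ = (∑ s ∈ range g, (#J).multichoose s * #Jᶜ ^ (g - s)) * (#Jᶜ).multichoose t := by
        simp only [sum_mul, mul_assoc]

/-- The nonnegative integer vectors with coordinate sum `m` that violate at least one of the lower
bounds `d J ≤ ∑ i ∈ J, c i`. -/
def deficientVectors (d : Finset ι → ℤ) (m : ℕ) : Finset (ι → ℕ) :=
  {c ∈ piAntidiag univ m | ∃ J, ∑ i ∈ J, (c i : ℤ) < d J}

variable {d : Finset ι → ℤ} {g : ℕ}

theorem piAntidiag_compl_subset_deficientVectors {J : Finset ι} (hJ : 0 < d J) (m : ℕ) :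
    piAntidiag Jᶜ m ⊆ deficientVectors d m := by
  intro c hc
  have hzero : ∀ i ∈ J, (c i : ℤ) = 0 := fun i hi ↦
    mod_cast not_not.1 fun h ↦ mem_compl.1 ((mem_piAntidiag.1 hc).2 i h) hi
  refine mem_filter.2 ⟨piAntidiag_subset_piAntidiag (subset_univ _) m hc, J, ?_⟩
  rwa [sum_eq_zero hzero]

theorem deficientVectors_subset {k : ℕ} (hd : Monotone d) (hg : d univ ≤ g)
    (hk : k ≤ Fintype.card ι) (hzero : ∀ J, #J = k → d J = 0) (m : ℕ) :
    deficientVectors d m ⊆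
      ({J | k < #J} : Finset (Finset ι)).biUnion fun J ↦
        {c ∈ piAntidiag univ m | ∑ i ∈ J, c i < g} := by
  intro c hc
  obtain ⟨hsum, J, hJ⟩ := mem_filter.1 hc
  refine mem_biUnion.2 ⟨J, mem_filter.2 ⟨mem_univ J, ?_⟩, mem_filter.2 ⟨hsum, ?_⟩⟩
  · by_contra! hcard
    obtain ⟨J', hJJ', hJ'⟩ := exists_superset_card_eq hcard hk
    have hpos : 0 ≤ ∑ i ∈ J, (c i : ℤ) := sum_nonneg fun _ _ ↦ Int.natCast_nonneg _
    linarith [hd hJJ', hzero J' hJ']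
  · exact_mod_cast hJ.trans_le ((hd (subset_univ J)).trans hg)

theorem card_deficientVectors_isLittleO_iff {k : ℕ} (hd : Monotone d) (hd_empty : d ∅ = 0)
    (hg : d univ ≤ g) (hk : k < Fintype.card ι) :
    ((fun t ↦ (#(deficientVectors d (g + t)) : ℝ)) =o[atTop]
      fun t ↦ ((Fintype.card ι - k).multichoose t : ℝ)) ↔ ∀ J, #J = k → d J = 0 := by
  constructor
  · rintro h J rfl
    by_contra hne
    have hpos : 0 < d J := (hd_empty ▸ hd (empty_subset J)).lt_of_ne' hne
    have hm : 0 < Fintype.card ι - #J := Nat.sub_pos_of_lt hk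
    refine multichoose_not_isLittleO_self hm (IsBigO.trans_isLittleO (isBigO_of_le _ fun t ↦ ?_) h)
    simp only [RCLike.norm_natCast, Nat.cast_le]
    calc (Fintype.card ι - #J).multichoose t
        ≤ (Fintype.card ι - #J).multichoose (g + t) := by
          rw [← Nat.sub_add_cancel hm]
          exact succ_multichoose_right_mono _ (Nat.le_add_left t g)
      _ = #(piAntidiag Jᶜ (g + t)) := by rw [card_piAntidiag, card_compl]
      _ ≤ #(deficientVectors d (g + t)) :=
          card_le_card (piAntidiag_compl_subset_deficientVectors hpos _)
  · intro hzero
    have hsum : (fun t ↦ ∑ J with k < #J,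
        (#{c ∈ piAntidiag (univ : Finset ι) (g + t) | ∑ i ∈ J, c i < g} : ℝ)) =o[atTop]
          fun t ↦ ((Fintype.card ι - k).multichoose t : ℝ) := by
      refine IsLittleO.fun_sum fun J hJ ↦ (card_filter_sum_lt_piAntidiag_isBigO J g).trans_isLittleO
        (multichoose_isLittleO ?_)
      have hkJ : k < #J := (mem_filter.1 hJ).2
      rw [card_compl]
      lia
    refine IsBigO.trans_isLittleO (isBigO_of_le _ fun t ↦ ?_) hsum
    rw [← Nat.cast_sum, RCLike.norm_natCast, RCLike.norm_natCast, Nat.cast_le]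
    exact (card_le_card (deficientVectors_subset hd hg hk.le hzero _)).trans card_biUnion_le

end PiAntidiag

section Submodular

variable {ι : Type*} {r : Finset ι → ℤ} {a b : ι → ℤ}

/-- An integer vector is independent for the set function `r` when `r` bounds its partial sums from
above. Negative entries are allowed, unlike for the independent vectors of a polymatroid. -/
def IsIndep (r : Finset ι → ℤ) (b : ι → ℤ) : Prop :=
  ∀ J, ∑ i ∈ J, b i ≤ r J

/-- A set is tight for the vector `b` when the bound of `r` on its partial sum is attained. -/
def IsTight (r : Finset ι → ℤ) (b : ι → ℤ) (J : Finset ι) : Prop :=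
  ∑ i ∈ J, b i = r J

/-- The bases of the set function `r` are the independent vectors with the largest conceivable
coordinate sum. -/
def IsBase [Fintype ι] (r : Finset ι → ℤ) (a : ι → ℤ) : Prop :=
  IsIndep r a ∧ IsTight r a univ

/-- The nullity of a set measures how far the set function `r` is from being additive on its
elements. -/
def nullity (r : Finset ι → ℤ) (J : Finset ι) : ℤ :=
  ∑ i ∈ J, r {i} - r J

theorem nullity_empty (hr_empty : r ∅ = 0) : nullity r ∅ = 0 := by
  simp [nullity, hr_empty]

theorem isIndep_singleton_sub_iff (r : Finset ι → ℤ) (c : ι → ℤ) :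
    IsIndep r (fun i ↦ r {i} - c i) ↔ ∀ J, nullity r J ≤ ∑ i ∈ J, c i := by
  refine forall_congr' fun J ↦ ?_
  rw [sum_sub_distrib, nullity, sub_le_comm]

theorem IsIndep.le_singleton (hb : IsIndep r b) (i : ι) : b i ≤ r {i} := by
  simpa using hb {i}

variable [DecidableEq ι]

theorem IsBase.sub_erase_le [Fintype ι] (ha : IsBase r a) (i : ι) :
    r univ - r (univ.erase i) ≤ a i := by
  have hsum : a i + ∑ j ∈ univ.erase i, a j = ∑ j, a j := add_sum_erase _ _ (mem_univ i)
  have htight : ∑ j, a j = r univ := ha.2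
  linarith [ha.1 (univ.erase i)]

theorem sum_add_single {M : Type*} [AddCommMonoid M] (b : ι → M) (j : ι) (x : M) (J : Finset ι) :
    ∑ i ∈ J, (b + Pi.single j x : ι → M) i = ∑ i ∈ J, b i + if j ∈ J then x else 0 := by
  simp only [Pi.add_apply, sum_add_distrib, sum_pi_single']

theorem sum_sub_single {M : Type*} [AddCommGroup M] (b : ι → M) (j : ι) (x : M) (J : Finset ι) :
    ∑ i ∈ J, (b - Pi.single j x : ι → M) i = ∑ i ∈ J, b i - if j ∈ J then x else 0 := by
  simp only [Pi.sub_apply, sum_sub_distrib, sum_pi_single']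

/-- Submodularity of an integer-valued set function, which need be neither monotone nor
normalized. -/
def IsSubmodular (r : Finset ι → ℤ) : Prop :=
  ∀ I J, r (I ∪ J) + r (I ∩ J) ≤ r I + r J

namespace IsSubmodular

theorem monotone_nullity (hr : IsSubmodular r) (hr_empty : r ∅ = 0) : Monotone (nullity r) := by
  refine (monotone_iff_forall_covBy _).2 fun I J hIJ ↦ ?_
  obtain ⟨i, hi, rfl⟩ := hIJ.exists_finset_insert
  have hsub : r (insert i I) ≤ r {i} + r I := by
    simpa [singleton_inter_of_notMem hi, hr_empty] using hr {i} I
  unfold nullity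
  rw [sum_insert hi]
  linarith

theorem isTight_union_inter (hr : IsSubmodular r) (hb : IsIndep r b) {I J : Finset ι}
    (hI : IsTight r b I) (hJ : IsTight r b J) : IsTight r b (I ∪ J) ∧ IsTight r b (I ∩ J) := by
  have hsum : ∑ i ∈ I ∪ J, b i + ∑ i ∈ I ∩ J, b i = ∑ i ∈ I, b i + ∑ i ∈ J, b i :=
    sum_union_inter
  unfold IsTight at *
  constructor <;> linarith [hr I J, hb (I ∪ J), hb (I ∩ J)]

variable [Fintype ι]

theorem exists_isIndep_add_single (hr : IsSubmodular r) (hr_empty : r ∅ = 0) (hb : IsIndep r b)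
    (hbase : ¬IsBase r b) : ∃ j, IsIndep r (b + Pi.single j 1) := by
  by_contra! h
  have tight_cover : ∀ j, ∃ J, j ∈ J ∧ IsTight r b J := by
    intro j
    obtain ⟨J, hJ⟩ := not_forall.1 (h j)
    rw [sum_add_single] at hJ
    refine ⟨J, by_contra fun hj ↦ hJ (by simpa [hj] using hb J), (hb J).antisymm ?_⟩
    split_ifs at hJ <;> linarith [hb J]
  choose J hJmem hJtight using tight_cover
  have hsup : IsTight r b (univ.sup J) :=
    sup_induction (by simp [IsTight, hr_empty])
      (fun I hI I' hI' ↦ (hr.isTight_union_inter hb hI hI').1) fun j _ ↦ hJtight j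
  have huniv : univ.sup J = univ :=
    eq_univ_of_forall fun j ↦ subset_iff.1 (le_sup (f := J) (mem_univ j)) (hJmem j)
  exact hbase ⟨hb, huniv ▸ hsup⟩

theorem exists_least_isTight (hr : IsSubmodular r) (ha : IsBase r a) (j : ι) :
    ∃ D, j ∈ D ∧ IsTight r a D ∧ ∀ J, j ∈ J → IsTight r a J → D ⊆ J := by
  obtain ⟨D, hD⟩ := exists_minimal_of_wellFoundedLT (fun J ↦ j ∈ J ∧ IsTight r a J)
    ⟨univ, mem_univ j, ha.2⟩
  refine ⟨D, hD.prop.1, hD.prop.2, fun J hj hJ ↦ ?_⟩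
  have hinter : j ∈ D ∩ J ∧ IsTight r a (D ∩ J) :=
    ⟨mem_inter.2 ⟨hD.prop.1, hj⟩, (hr.isTight_union_inter ha.1 hD.prop.2 hJ).2⟩
  exact (hD.le_of_le hinter inter_subset_left).trans inter_subset_right

theorem exists_isBase_exchange (hr : IsSubmodular r) {a' : ι → ℤ} (ha : IsBase r a)
    (ha' : IsBase r a') {j : ι} (hj : a j < a' j) :
    ∃ i, a' i < a i ∧ IsBase r (a - Pi.single i 1 + Pi.single j 1) := by
  obtain ⟨D, hjD, hD, hmin⟩ := hr.exists_least_isTight ha j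
  obtain ⟨i, hiD, hi⟩ : ∃ i ∈ D, a' i < a i := by
    by_contra! h
    exact (sum_lt_sum h ⟨j, hjD, hj⟩).not_ge ((ha'.1 D).trans_eq hD.symm)
  refine ⟨i, hi, fun J ↦ ?_, ?_⟩
  · rw [sum_add_single, sum_sub_single]
    by_cases hJ : IsTight r a J
    · have hij : j ∈ J → i ∈ J := fun h ↦ hmin J h hJ hiD
      split_ifs <;> grind [ha.1 J]
    · have hlt : ∑ l ∈ J, a l < r J := (ha.1 J).lt_of_ne hJ
      split_ifs <;> linarith
  · rw [IsTight, sum_add_single, sum_sub_single]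
    simpa [IsTight] using ha.2

end IsSubmodular

end Submodular

section Activity

variable {ι : Type*} [Fintype ι] {r : Finset ι → ℤ} {a b : ι → ℤ}

theorem finite_setOf_isBase (r : Finset ι → ℤ) : {a | IsBase r a}.Finite := by
  classical
  exact (Set.finite_Icc (fun i ↦ r univ - r (univ.erase i)) fun i ↦ r {i}).subset
    fun a ha ↦ ⟨ha.sub_erase_le, ha.1.le_singleton⟩

/-- The finite set of bases of the set function `r`. -/
noncomputable def bases (r : Finset ι → ℤ) : Finset (ι → ℤ) :=
  (finite_setOf_isBase r).toFinset

theorem mem_bases : a ∈ bases r ↔ IsBase r a := by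
  simp [bases]

variable [LinearOrder ι]

open scoped Classical in
/-- The internally active indices of a base: no unit can be moved from them to a smaller
index without leaving the set of bases. -/
noncomputable def internallyActive (r : Finset ι → ℤ) (a : ι → ℤ) : Finset ι :=
  {i | ∀ j < i, ¬IsBase r (a - Pi.single i 1 + Pi.single j 1)}

theorem mem_internallyActive {i : ι} :
    i ∈ internallyActive r a ↔ ∀ j < i, ¬IsBase r (a - Pi.single i 1 + Pi.single j 1) := by
  simp [internallyActive]

theorem internallyActive_nonempty [Nonempty ι] (r : Finset ι → ℤ) (a : ι → ℤ) :
    (internallyActive r a).Nonempty := by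
  obtain ⟨i, hi⟩ := Finite.exists_min (id : ι → ι)
  exact ⟨i, mem_internallyActive.2 fun j hj ↦ absurd (hi j) hj.not_ge⟩

theorem IsSubmodular.exists_isBase_ge_mem_internallyActive (hr : IsSubmodular r)
    (hr_empty : r ∅ = 0) (hb : IsIndep r b) :
    ∃ a, IsBase r a ∧ b ≤ a ∧ ∀ i, b i < a i → i ∈ internallyActive r a := by
  have hfin : {a | IsIndep r a ∧ b ≤ a}.Finite :=
    (Set.finite_Icc b fun i ↦ r {i}).subset fun a ha ↦ ⟨ha.2, ha.1.le_singleton⟩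
  -- Adding a unit, or moving one to a smaller index, increases a vector lexicographically.
  obtain ⟨a, ⟨ha, hba⟩, hmax⟩ := Set.exists_max_image _ (toLex : (ι → ℤ) → _) hfin ⟨b, hb, le_rfl⟩
  refine ⟨a, by_contra fun hbase ↦ ?_, hba, fun i hi ↦ mem_internallyActive.2 fun j hj h ↦ ?_⟩
  · obtain ⟨j, hj⟩ := hr.exists_isIndep_add_single hr_empty ha hbase
    have hlt : a < a + Pi.single j 1 := lt_add_of_pos_right a (Pi.single_pos.2 one_pos)
    exact (hmax _ ⟨hj, hba.trans hlt.le⟩).not_gt (Pi.toLex_strictMono hlt)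
  · refine (hmax _ ⟨h.1, fun l ↦ ?_⟩).not_gt ⟨j, fun l hl ↦ ?_, ?_⟩
    · by_cases hl : l = i
      · subst hl
        simpa [hj.ne'] using Int.le_sub_one_of_lt hi
      · have hsingle : (0 : ι → ℤ) ≤ Pi.single j 1 := Pi.single_nonneg.2 zero_le_one
        simpa [hl] using (hba l).trans (le_add_of_nonneg_right (hsingle l))
    · simp [hl.ne, (hl.trans hj).ne]
    · simp [hj.ne]

theorem IsSubmodular.isBase_unique_of_mem_internallyActive (hr : IsSubmodular r) {a' : ι → ℤ}
    (ha : IsBase r a) (hba : b ≤ a) (hact : ∀ i, b i < a i → i ∈ internallyActive r a)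
    (ha' : IsBase r a') (hba' : b ≤ a')
    (hact' : ∀ i, b i < a' i → i ∈ internallyActive r a') : a = a' := by
  by_contra hne
  wlog hlt : toLex a < toLex a' generalizing a a'
  · exact this ha' hba' hact' ha hba hact (Ne.symm hne)
      ((not_lt.1 hlt).lt_of_ne fun h ↦ hne (toLex.injective h).symm)
  obtain ⟨j, hagree, hj⟩ := hlt
  obtain ⟨i, hi, hbase⟩ := hr.exists_isBase_exchange ha ha' hj
  have hji : j < i := by
    refine lt_of_not_ge fun hij ↦ ?_
    rcases hij.lt_or_eq with h | rfl
    · exact hi.ne' (hagree i h)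
    · exact hi.asymm hj
  exact mem_internallyActive.1 (hact i ((hba' i).trans_lt hi)) j hji hbase

end Activity

section Counting

variable {ι : Type*} [LinearOrder ι] [Fintype ι] {r : Finset ι → ℤ} {g : ℕ}

theorem card_filter_le_isBase {a : ι → ℤ} (ha : IsBase r a) (hg : g + r univ = ∑ i, r {i})
    (t : ℕ) :
    #{c ∈ (piAntidiag univ (g + t) : Finset (ι → ℕ)) | ∀ i, r {i} - (c i : ℤ) ≤ a i ∧
        (r {i} - (c i : ℤ) < a i → i ∈ internallyActive r a)} =
      (#(internallyActive r a)).multichoose t := by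
  obtain ⟨s, hs⟩ : ∃ s : ι → ℕ, ∀ i, (s i : ℤ) = r {i} - a i :=
    ⟨fun i ↦ (r {i} - a i).toNat, fun i ↦ Int.toNat_of_nonneg (sub_nonneg.2 (ha.1.le_singleton i))⟩
  have hsum : ∑ i, s i = g := by
    have htight : ∑ i, a i = r univ := ha.2
    zify
    simp only [hs, sum_sub_distrib]
    linarith
  have hle : ∀ i (x : ℕ), r {i} - x ≤ a i ↔ s i ≤ x := by grind
  have hlt : ∀ i (x : ℕ), r {i} - x < a i ↔ s i < x := by grind
  simp only [hle, hlt, ← hsum, filter_le_piAntidiag_univ, card_map, card_piAntidiag]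

theorem card_filter_nullity_le (hr : IsSubmodular r) (hr_empty : r ∅ = 0)
    (hg : g + r univ = ∑ i, r {i}) (t : ℕ) :
    #{c ∈ (piAntidiag univ (g + t) : Finset (ι → ℕ)) | ∀ J, nullity r J ≤ ∑ i ∈ J, (c i : ℤ)} =
      ∑ a ∈ bases r, (#(internallyActive r a)).multichoose t := by
  rw [← sum_congr rfl fun a ha ↦ card_filter_le_isBase (mem_bases.1 ha) hg t, ← card_biUnion]
  · congr 1
    ext c
    simp only [mem_filter, mem_biUnion, mem_bases, forall_and, ← isIndep_singleton_sub_iff]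
    constructor
    · rintro ⟨hc, hindep⟩
      obtain ⟨a, ha, hle, hact⟩ := hr.exists_isBase_ge_mem_internallyActive hr_empty hindep
      exact ⟨a, ha, hc, hle, hact⟩
    · rintro ⟨a, ha, hc, hle, -⟩
      exact ⟨hc, fun J ↦ (sum_le_sum fun i _ ↦ hle i).trans (ha.1 J)⟩
  · intro a ha a' ha' hne
    refine disjoint_filter.2 fun c _ hc hc' ↦ hne ?_
    rw [forall_and] at hc hc'
    exact hr.isBase_unique_of_mem_internallyActive (mem_bases.1 ha) hc.1 hc.2 (mem_bases.1 ha')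
       hc'.1 hc'.2

theorem card_deficientVectors_nullity_add (hr : IsSubmodular r) (hr_empty : r ∅ = 0)
    (hg : g + r univ = ∑ i, r {i}) (t : ℕ) :
    #(deficientVectors (nullity r) (g + t)) +
        ∑ a ∈ bases r, (#(internallyActive r a)).multichoose t =
      (Fintype.card ι).multichoose (g + t) := by
  rw [← card_filter_nullity_le hr hr_empty hg, ← card_univ, ← card_piAntidiag, deficientVectors,
    ← card_filter_add_card_filter_not (s := piAntidiag univ (g + t)) fun c ↦
      ∃ J, ∑ i ∈ J, (c i : ℤ) < nullity r J]
  simp only [not_exists, not_lt]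

/-- The interior polynomial of an integer-valued set function on a finite linearly ordered ground
set; each base contributes its number of internally inactive indices as an exponent. -/
noncomputable def interiorPolynomial (r : Finset ι → ℤ) : ℤ[X] :=
  ∑ a ∈ bases r, X ^ (Fintype.card ι - #(internallyActive r a))

theorem sum_coeff_interiorPolynomial_mul [Nonempty ι] {R : Type*} [Ring R] (r : Finset ι → ℤ)
    (F : ℕ → R) :
    ∑ i ∈ range (Fintype.card ι), ((interiorPolynomial r).coeff i : R) * F i =
      ∑ a ∈ bases r, F (Fintype.card ι - #(internallyActive r a)) := by
  simp only [interiorPolynomial, finsetSum_coeff, coeff_X_pow, Int.cast_sum, sum_mul]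
  rw [sum_comm]
  refine sum_congr rfl fun a _ ↦ ?_
  have hlt : Fintype.card ι - #(internallyActive r a) < Fintype.card ι :=
    Nat.sub_lt Fintype.card_pos (internallyActive_nonempty r a).card_pos
  simp [hlt]

theorem card_deficientVectors_nullity_eq_sum [Nonempty ι] (hr : IsSubmodular r)
    (hr_empty : r ∅ = 0) (hg : g + r univ = ∑ i, r {i}) (t : ℕ) :
    (#(deficientVectors (nullity r) (g + t)) : ℝ) =
      ∑ i ∈ range (Fintype.card ι), (g.multichoose i - (interiorPolynomial r).coeff i : ℝ) *
        (Fintype.card ι - i).multichoose t := by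
  obtain ⟨n, hn⟩ := Nat.exists_eq_succ_of_ne_zero (Fintype.card_ne_zero (α := ι))
  have hcount := card_deficientVectors_nullity_add hr hr_empty hg t
  rw [hn, Nat.succ_eq_add_one, succ_multichoose_add, ← Nat.succ_eq_add_one, ← hn] at hcount
  have hbases : ∀ a ∈ bases r, (#(internallyActive r a)).multichoose t =
      (Fintype.card ι - (Fintype.card ι - #(internallyActive r a))).multichoose t := fun a _ ↦ by
    rw [Nat.sub_sub_self (card_le_univ _)]
  rw [sum_congr rfl hbases] at hcount
  simp only [sub_mul, sum_sub_distrib]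
  rw [sum_coeff_interiorPolynomial_mul r fun i ↦ ((Fintype.card ι - i).multichoose t : ℝ)]
  exact eq_sub_of_add_eq (mod_cast hcount)

theorem interiorPolynomial_of_isEmpty [IsEmpty ι] (hr_empty : r ∅ = 0) :
    interiorPolynomial r = 1 := by
  have hbases : bases r = {isEmptyElim} := by
    refine eq_singleton_iff_unique_mem.2 ⟨mem_bases.2 ⟨fun J ↦ ?_, ?_⟩,
      fun a _ ↦ Subsingleton.elim _ _⟩
    · simp [eq_empty_of_isEmpty J, hr_empty]
    · simp [IsTight, hr_empty]
  simp [interiorPolynomial, hbases]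

end Counting

namespace IsPolymatroidRank

variable {n : ℕ} {f : Finset (Fin n) → ℕ}

theorem isSubmodular (hf : IsPolymatroidRank n f) : IsSubmodular fun I ↦ (f I : ℤ) := by
  intro I J
  beta_reduce
  exact_mod_cast hf.2.2 I J

theorem nonneg_of_isBase (hf : IsPolymatroidRank n f) {a : Fin n → ℤ}
    (ha : IsBase (fun I ↦ (f I : ℤ)) a) (i : Fin n) : 0 ≤ a i :=
  (sub_nonneg.2 (mod_cast hf.2.1 _ _ (erase_subset i univ))).trans (ha.sub_erase_le i)

theorem polyBases_eq_bases (hf : IsPolymatroidRank n f) :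
    polyBases n f = bases fun I ↦ (f I : ℤ) := by
  ext a
  simp only [polyBases, mem_filter, mem_image, mem_univ, true_and, mem_bases]
  constructor
  · rintro ⟨-, -, hindep, htight⟩
    exact ⟨hindep, htight⟩
  · intro ha
    have hnonneg := hf.nonneg_of_isBase ha
    have hle : ∀ i, a i ≤ f univ := fun i ↦
      (ha.1.le_singleton i).trans (mod_cast hf.2.1 _ _ (subset_univ {i}))
    refine ⟨⟨fun i ↦ ⟨(a i).toNat, by grind⟩, ?_⟩, hnonneg, ha.1, ha.2⟩
    ext i
    exact Int.toNat_of_nonneg (hnonneg i)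

theorem intAct_eq_internallyActive (hf : IsPolymatroidRank n f) (a : Fin n → ℤ) :
    intAct n f a = internallyActive (fun I ↦ (f I : ℤ)) a := by
  have hshift : ∀ i j : Fin n, (fun t ↦ a t - (if t = i then 1 else 0) + if t = j then 1 else 0) =
      a - Pi.single i 1 + Pi.single j 1 := fun i j ↦ by
    ext t
    simp [Pi.single_apply]
  ext i
  simp [intAct, mem_internallyActive, hf.polyBases_eq_bases, mem_bases, hshift]

theorem interiorPoly_eq_interiorPolynomial (hf : IsPolymatroidRank n f) :
    interiorPoly n f = interiorPolynomial fun I ↦ (f I : ℤ) := by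
  simp only [interiorPoly, interiorPolynomial, hf.polyBases_eq_bases,
    hf.intAct_eq_internallyActive, Fintype.card_fin]

end IsPolymatroidRank

theorem stmt14_general {ι : Type*} [LinearOrder ι] [Fintype ι] {r : Finset ι → ℤ}
    (hr : IsSubmodular r) (hr_empty : r ∅ = 0) {g : ℕ} (hg : g + r univ = ∑ i, r {i}) {k : ℕ}
    (hk : k ≤ Fintype.card ι - 1) :
    (∀ i ≤ k, (interiorPolynomial r).coeff i = ((g + i - 1).choose i : ℤ)) ↔
      ∀ J, #J = k → ∑ i ∈ J, r {i} = r J := by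
  rcases isEmpty_or_nonempty ι with hι | hι
  · obtain rfl : k = 0 := by simpa using hk
    simp [interiorPolynomial_of_isEmpty hr_empty, hr_empty]
  · have hkn : k < Fintype.card ι := by have := Fintype.card_pos (α := ι); lia
    have hg_nullity : nullity r univ ≤ g := by rw [nullity]; linarith
    have hcoeff : ∀ i, (g.multichoose i - (interiorPolynomial r).coeff i : ℝ) = 0 ↔
        (interiorPolynomial r).coeff i = ((g + i - 1).choose i : ℤ) := fun i ↦ by
      rw [sub_eq_zero, eq_comm, Nat.multichoose_eq]
      norm_cast
    have growth := card_deficientVectors_isLittleO_iff (hr.monotone_nullity hr_empty)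
      (nullity_empty hr_empty) hg_nullity hkn
    simp only [card_deficientVectors_nullity_eq_sum hr hr_empty hg] at growth
    rw [sum_mul_multichoose_isLittleO_iff hkn] at growth
    simpa only [hcoeff, nullity, sub_eq_zero] using growth

/-- With `g = ∑_{i ∈ [n]} f {i} - f [n]`, for every `k ≤ n - 1`:
`[x^i]I_P(x) = C(g+i-1, i)` for all `i ≤ k` iff `∑_{i ∈ J} f {i} = f J` for all
`J ⊆ [n]` with `|J| = k`. -/
theorem stmt14 (n : ℕ) (f : Finset (Fin n) → ℕ) (hf : IsPolymatroidRank n f)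
    (g : ℕ) (hg : g + f Finset.univ = ∑ i : Fin n, f {i})
    (k : ℕ) (hk : k ≤ n - 1) :
    (∀ i ≤ k, (interiorPoly n f).coeff i = ((g + i - 1).choose i : ℤ)) ↔
      ∀ J : Finset (Fin n), J.card = k → (∑ i ∈ J, f {i}) = f J := by
  rw [hf.interiorPoly_eq_interiorPolynomial]
  exact_mod_cast stmt14_general hf.isSubmodular (mod_cast hf.1) (mod_cast hg) (by simpa using hk)
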